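/- arXiv:1809.07982 — 2 statements merged into one kernel-verified Lean document; each statement's English description precedes it below -/
import Mathlib

section
/- Let q be an odd prime and r a positive integer with q^r > 45, let K be a finite field with q^r elements, and let g be a generator of the multiplicative group K^×. Then for every element k ∈ K there exist odd integers m and n such that (g^m − g^{−m})·g^n − (g^m + g^{−m}) = k. -/
open Polynomial

namespace Stmt17

theorem pow_dvd_hasse {K : Type} [Field K] (P b : K[X]) (n k : ℕ) :
    P ^ n ∣ P ^ k * hasseDeriv k (P ^ n * b) := by
  induction n generalizing k with
  | zero => simp
  | succ n ih =>
    have e : P ^ (n + 1) * b = P * (P ^ n * b) := by ring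
    rw [e, hasseDeriv_mul, Finset.mul_sum]
    refine Finset.dvd_sum ?_
    rintro ⟨i, j⟩ hij
    rw [Finset.HasAntidiagonal.mem_antidiagonal] at hij
    simp only at hij ⊢
    rcases i with _ | i
    · have hj : j = k := by omega
      subst hj
      obtain ⟨c, hc⟩ := ih j
      refine ⟨c, ?_⟩
      simp only [hasseDeriv_zero, LinearMap.id_apply]
      calc P ^ j * (P * hasseDeriv j (P ^ n * b)) = P * (P ^ j * hasseDeriv j (P ^ n * b)) := by ring
        _ = _ := by rw [hc]; ring
    · obtain ⟨c, hc⟩ := ih j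
      refine ⟨P ^ i * hasseDeriv (i + 1) P * c, ?_⟩
      subst hij
      calc P ^ (i + 1 + j) * (hasseDeriv (i + 1) P * hasseDeriv j (P ^ n * b))
          = P ^ i * hasseDeriv (i + 1) P * P * (P ^ j * hasseDeriv j (P ^ n * b)) := by ring
        _ = _ := by rw [hc]; ring

noncomputable def FF {K : Type} [Field K] (k : K) : K[X] := (X ^ 2 - 1) * (X ^ 2 + C k * X + 1)

theorem FF_monic {K : Type} [Field K] (k : K) : (FF k).Monic := by
  unfold FF
  apply Monic.mul <;> monicity!

theorem FF_natDegree {K : Type} [Field K] (k : K) : (FF k).natDegree = 4 := by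
  unfold FF
  rw [Monic.natDegree_mul (by monicity!) (by monicity!)]
  have h1 : (X ^ 2 - 1 : K[X]).natDegree = 2 := by compute_degree!
  have h2 : (X ^ 2 + C k * X + 1 : K[X]).natDegree = 2 := by compute_degree!
  rw [h1, h2]

theorem FF_zero {K : Type} [Field K] (k : K) : (FF k).eval 0 = -1 := by
  simp [FF]

theorem FF_eval {K : Type} [Field K] (k x : K) :
    (FF k).eval x = (x ^ 2 - 1) * (x ^ 2 + k * x + 1) := by
  simp [FF]

theorem X_coprime_FF {K : Type} [Field K] (k : K) : IsCoprime (X : K[X]) (FF k) := by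
  refine ⟨X ^ 3 + C k * X ^ 2 - C k, -1, ?_⟩
  unfold FF
  ring

theorem exists_T {K : Type} [Field K] (κ : K) (n m k : ℕ) :
    ∃ T : K[X] →ₗ[K] K[X],
      (∀ b, (X ^ n * FF κ ^ m) * T b = (X * FF κ) ^ k * hasseDeriv k (X ^ n * FF κ ^ m * b)) ∧
      ∀ D, ∀ b ∈ degreeLT K D, T b ∈ degreeLT K (D + 4 * k) := by
  have hQm : (X ^ n * FF κ ^ m).Monic := (monic_X_pow n).mul ((FF_monic κ).pow m)
  have hQ : (X ^ n * FF κ ^ m) ≠ 0 := hQm.ne_zero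
  have hdvd : ∀ b, X ^ n * FF κ ^ m ∣
      (X * FF κ) ^ k * hasseDeriv k (X ^ n * FF κ ^ m * b) := by
    intro b
    refine (IsCoprime.pow (X_coprime_FF κ)).mul_dvd ?_ ?_
    · have := pow_dvd_hasse X (FF κ ^ m * b) n k
      rw [← mul_assoc] at this
      rw [mul_pow, mul_comm (X ^ k), mul_assoc]
      exact this.mul_left _
    · have := pow_dvd_hasse (FF κ) (X ^ n * b) m k
      rw [show X ^ n * FF κ ^ m * b = FF κ ^ m * (X ^ n * b) by ring]
      rw [mul_pow, mul_assoc]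
      exact this.mul_left _
  choose t ht using hdvd
  refine ⟨{ toFun := t, map_add' := ?_, map_smul' := ?_ }, ?_, ?_⟩
  · intro a b
    apply mul_left_cancel₀ hQ
    rw [← ht, mul_add, map_add, mul_add, mul_add, ← ht, ← ht]
  · intro c b
    apply mul_left_cancel₀ hQ
    simp only [RingHom.id_apply]
    rw [← ht, mul_smul_comm, mul_smul_comm, map_smul, mul_smul_comm, ← ht]
  · intro b
    exact (ht b).symm
  · intro D b hb
    change t b ∈ _
    by_cases h0 : t b = 0
    · rw [h0]; exact Submodule.zero_mem _
    have h := ht b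
    have hb0 : b ≠ 0 := by
      rintro rfl
      simp at h
      rcases h with h | h
      · exact absurd h (by simpa using hQ)
      · exact h0 h
    have hd0 : hasseDeriv k (X ^ n * FF κ ^ m * b) ≠ 0 := by
      intro h1
      rw [h1, mul_zero] at h
      exact (mul_ne_zero hQ h0) h.symm
    have hk : k ≤ (X ^ n * FF κ ^ m * b).natDegree := by
      by_contra hlt
      exact hd0 (hasseDeriv_eq_zero_of_lt_natDegree _ _ (by omega))
    have h1 := natDegree_hasseDeriv_le (X ^ n * FF κ ^ m * b) k
    have hXF : (X * FF κ) ^ k ≠ 0 := (monic_X.mul (FF_monic κ)).pow k |>.ne_zero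
    have h2 := congrArg natDegree h
    rw [natDegree_mul hXF hd0, natDegree_mul hQ h0] at h2
    rw [natDegree_mul hQ hb0] at h1 hk
    have h3 : ((X * FF κ) ^ k).natDegree = k * 5 := by
      rw [natDegree_pow, monic_X.natDegree_mul (FF_monic κ), FF_natDegree, natDegree_X]
    rw [mem_degreeLT, degree_eq_natDegree hb0] at hb
    rw [mem_degreeLT, degree_eq_natDegree h0]
    norm_cast at hb ⊢
    omega

theorem rm_odd {K : Type} [Field K] (h2 : (2 : K) ≠ 0) (k : K) : Odd (rootMultiplicity 1 (FF k)) := by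
  have hm := (FF_monic k).ne_zero
  have hF : FF k = (X - C 1) * ((X + 1) * (X ^ 2 + C k * X + 1)) := by
    unfold FF; simp; ring
  rw [hF] at hm ⊢
  rw [rootMultiplicity_mul hm, rootMultiplicity_X_sub_C_self]
  have hm' := (mul_ne_zero_iff.1 hm).2
  rw [rootMultiplicity_mul hm']
  rw [rootMultiplicity_eq_zero (p := X + 1) (by simp [IsRoot]; intro h; apply h2; rw [← h]; norm_num)]
  by_cases hk : k = -2
  · have : (X ^ 2 + C k * X + 1 : K[X]) = (X - C 1) ^ 2 := by
      rw [hk]; simp only [map_neg, map_ofNat, map_one]; ring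
    rw [this, rootMultiplicity_X_sub_C_pow]
    decide
  · rw [rootMultiplicity_eq_zero]
    · decide
    · simp [IsRoot]
      intro h
      apply hk
      linear_combination h

theorem ab_zero {K : Type} [Field K] (h2 : (2 : K) ≠ 0) (k : K) (a b : K[X])
    (h : a ^ 2 * FF k + b ^ 2 = 0) : a = 0 ∧ b = 0 := by
  by_cases ha : a = 0
  · subst ha
    simpa using h
  exfalso
  have hF := (FF_monic k).ne_zero
  have h1 : a ^ 2 * FF k = - b ^ 2 := by linear_combination h
  have h3 : a ^ 2 * FF k ≠ 0 := mul_ne_zero (pow_ne_zero _ ha) hF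
  have hb : b ^ 2 ≠ 0 := by
    intro hb; apply h3; rw [h1, hb, neg_zero]
  have h4 : a ^ 2 * FF k = C (-1) * b ^ 2 := by rw [h1]; simp
  have h5 := congrArg (rootMultiplicity 1) h4
  rw [rootMultiplicity_mul h3, rootMultiplicity_mul (h4 ▸ h3), rootMultiplicity_C, pow_two, pow_two,
    rootMultiplicity_mul (by simpa using ha), rootMultiplicity_mul (by simpa using hb)] at h5
  obtain ⟨c, hc⟩ := rm_odd h2 k
  omega

theorem nonvanish {K : Type} [Field K] [Fintype K] (h D : ℕ) (hcard : Fintype.card K = 2 * h + 1)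
    (h2 : (2 : K) ≠ 0) (hD : 2 * D + 4 ≤ h + 1) (k : K) (J : ℕ) (a b : ℕ → K[X])
    (ha : ∀ j, a j ∈ degreeLT K D) (hb : ∀ j, b j ∈ degreeLT K D)
    (hR : ∑ j ∈ Finset.range J, (X ^ (h * j) * FF k ^ 0 * a j + X ^ (h * j) * FF k ^ h * b j) = 0) :
    ∀ j < J, a j = 0 ∧ b j = 0 := by
  induction J generalizing a b with
  | zero => intro j hj; omega
  | succ J ih =>
    rw [Finset.sum_range_succ'] at hR
    have e : ∑ j ∈ Finset.range J, (X ^ (h * (j + 1)) * FF k ^ 0 * a (j + 1)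
        + X ^ (h * (j + 1)) * FF k ^ h * b (j + 1)) = X ^ h * ∑ j ∈ Finset.range J,
        (X ^ (h * j) * FF k ^ 0 * a (j + 1) + X ^ (h * j) * FF k ^ h * b (j + 1)) := by
      rw [Finset.mul_sum]
      refine Finset.sum_congr rfl fun j _ => ?_
      rw [mul_add h, mul_one, pow_add]; ring
    rw [e] at hR
    have hd : (X : K[X]) ^ h ∣ a 0 + FF k ^ h * b 0 := by
      refine ⟨- ∑ j ∈ Finset.range J,
        (X ^ (h * j) * FF k ^ 0 * a (j + 1) + X ^ (h * j) * FF k ^ h * b (j + 1)), ?_⟩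
      simp only [mul_zero, pow_zero, one_mul] at hR ⊢
      linear_combination hR
    have hq : (X : K[X]) ^ h ∣ FF k ^ (2 * h + 1) + 1 := by
      rw [← hcard, ← FiniteField.expand_card, hcard]
      have h1 : (X : K[X]) ∣ FF k + 1 := by
        rw [X_dvd_iff, coeff_zero_eq_eval_zero]; simp [FF_zero]
      obtain ⟨c, hc⟩ := h1
      have h3 : expand K (2 * h + 1) (FF k + 1) = X ^ (2 * h + 1) * expand K (2 * h + 1) c := by
        rw [hc, map_mul, expand_X]
      rw [map_add, map_one] at h3
      rw [h3]
      exact (pow_dvd_pow X (by omega)).mul_right _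
    have hz : (X : K[X]) ^ h ∣ a 0 ^ 2 * FF k + b 0 ^ 2 := by
      have h3 := (hd.mul_left (FF k * (a 0 - FF k ^ h * b 0))).add (hq.mul_left (b 0 ^ 2))
      convert h3 using 1
      ring
    have hz0 : a 0 ^ 2 * FF k + b 0 ^ 2 = 0 := by
      refine eq_zero_of_dvd_of_natDegree_lt hz ?_
      have hDa : ∀ p ∈ degreeLT K D, D = 0 ∧ p = 0 ∨ p.natDegree < D := by
        intro p hp
        rw [mem_degreeLT] at hp
        by_cases hp0 : p = 0
        · subst hp0
          rcases Nat.eq_zero_or_pos D with h | h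
          · left; exact ⟨h, rfl⟩
          · right; simpa using h
        · right
          rw [degree_eq_natDegree hp0] at hp
          exact_mod_cast hp
      rw [natDegree_X_pow]
      have h4 : (a 0 ^ 2 * FF k + b 0 ^ 2).natDegree ≤ 
          max (2 * (a 0).natDegree + 4) (2 * (b 0).natDegree) := by
        refine (natDegree_add_le _ _).trans (max_le_max ?_ ?_)
        · refine natDegree_mul_le.trans ?_
          rw [FF_natDegree]
          have := natDegree_pow_le (p := a 0) (n := 2)
          omega
        · exact natDegree_pow_le
      rcases hDa _ (ha 0) with ⟨hh, h5⟩ | h5 <;> rcases hDa _ (hb 0) with ⟨hh', h6⟩ | h6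
      · rw [h5, h6]; simp; omega
      all_goals omega
    have h0 := ab_zero h2 k _ _ hz0
    rw [h0.1, h0.2] at hR
    simp only [mul_zero, add_zero] at hR
    have hR' := (mul_eq_zero.1 hR).resolve_left (pow_ne_zero _ X_ne_zero)
    have := ih (fun j => a (j + 1)) (fun j => b (j + 1)) (fun j => ha _) (fun j => hb _) hR'
    intro j hj
    rcases j with _ | j
    · exact h0
    · exact this j (by omega)

theorem mult_of_hasse {K : Type} [Field K] (R : K[X]) (x : K) (M : ℕ)
    (h : ∀ k < M, (hasseDeriv k R).eval x = 0) : (X - C x) ^ M ∣ R := by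
  rw [X_sub_C_pow_dvd_iff, X_pow_dvd_iff]
  intro d hd
  have := taylor_coeff x R d
  rw [h d hd] at this
  exact this


theorem mem_natDegree {K : Type} [Field K] {D : ℕ} {p : K[X]} (hp : p ∈ degreeLT K (D + 1)) :
    p.natDegree ≤ D := by
  rw [mem_degreeLT] at hp
  by_cases hp0 : p = 0
  · simp [hp0]
  · rw [degree_eq_natDegree hp0] at hp
    have : p.natDegree < D + 1 := by exact_mod_cast hp
    omega

theorem finrank_degLT {K : Type} [Field K] (D : ℕ) : Module.finrank K (degreeLT K D) = D := by
  rw [(degreeLTEquiv K D).finrank_eq]; simp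

instance finite_degLT {K : Type} [Field K] (D : ℕ) : Module.Finite K (degreeLT K D) :=
  Module.Finite.equiv (degreeLTEquiv K D).symm

/-- The auxiliary polynomial coefficients. -/
theorem exists_aux {K : Type} [Field K] (h : ℕ) (hh : h ≠ 0) (κ : K) :
    ∃ a b : ℕ → K[X], (∀ j, a j ∈ degreeLT K 61) ∧ (∀ j, b j ∈ degreeLT K 61) ∧
      (∃ j < 10, ¬ (a j = 0 ∧ b j = 0)) ∧
      ∀ k < 14, ∀ x : K, x ^ h = -1 → (FF κ).eval x ^ h = 1 → 
        (hasseDeriv k (∑ j ∈ Finset.range 10,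
          (X ^ (h * j) * FF κ ^ 0 * a j + X ^ (h * j) * FF κ ^ h * b j))).eval x = 0 := by
  choose T hT hTd using fun n m k => exists_T κ n m k
  let V := (Fin 10 → degreeLT K 61) × (Fin 10 → degreeLT K 61)
  let W := (k : Fin 14) → degreeLT K (61 + 4 * (k : ℕ))
  let T' : (n m : ℕ) → (k : Fin 14) → (degreeLT K 61 →ₗ[K] degreeLT K (61 + 4 * (k : ℕ))) :=
    fun n m k => (T n m k).restrict (hTd n m k 61)
  let Φ : V →ₗ[K] W := LinearMap.pi fun k => 
    ∑ j : Fin 10, ((-1 : K) ^ (j : ℕ)) • 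
      ((T' (h * j) 0 k) ∘ₗ (LinearMap.proj j) ∘ₗ (LinearMap.fst K _ _)
       + (T' (h * j) h k) ∘ₗ (LinearMap.proj j) ∘ₗ (LinearMap.snd K _ _))
  have hker : LinearMap.ker Φ ≠ ⊥ := by
    apply LinearMap.ker_ne_bot_of_finrank_lt
    have h1 : Module.finrank K V = 1220 := by
      simp only [V, Module.finrank_prod, Module.finrank_pi_fintype, finrank_degLT]
      simp
    have h2 : Module.finrank K W = 1218 := by
      simp only [W, Module.finrank_pi_fintype, finrank_degLT]
      simp [Fin.sum_univ_succ]
    omega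
  obtain ⟨v, hv, hv0⟩ := Submodule.exists_mem_ne_zero_of_ne_bot hker
  rw [LinearMap.mem_ker] at hv
  refine ⟨fun j => if hj : j < 10 then (v.1 ⟨j, hj⟩ : K[X]) else 0,
    fun j => if hj : j < 10 then (v.2 ⟨j, hj⟩ : K[X]) else 0, ?_, ?_, ?_, ?_⟩
  · intro j
    dsimp only
    split_ifs
    · exact Subtype.prop _
    · exact Submodule.zero_mem _
  · intro j
    dsimp only
    split_ifs
    · exact Subtype.prop _
    · exact Submodule.zero_mem _
  · by_contra hcon
    push Not at hcon
    apply hv0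
    refine Prod.ext (funext fun j => ?_) (funext fun j => ?_)
    · have := (hcon j j.2).1
      simpa using this
    · have := (hcon j j.2).2
      simpa using this
  · intro k hk x hx hFx
    have hkk : ∑ j : Fin 10, ((-1 : K) ^ (j : ℕ)) • (T (h * j) 0 k (v.1 j : K[X])
        + T (h * j) h k (v.2 j : K[X])) = 0 := by
      have e := congrArg (fun w : W => ((w ⟨k, hk⟩ : degreeLT K _) : K[X])) hv
      have e2 : ((Φ v ⟨k, hk⟩ : degreeLT K _) : K[X]) = ((∑ j : Fin 10, ((-1 : K) ^ (j : ℕ)) •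
          (T' (h * j) 0 ⟨k, hk⟩ (v.1 j) + T' (h * j) h ⟨k, hk⟩ (v.2 j)) : degreeLT K _) : K[X]) := by
        congr 1
      have e3 : ((Φ v ⟨k, hk⟩ : degreeLT K _) : K[X]) = 0 := e
      rw [e2, Submodule.coe_sum] at e3
      exact e3
    have hne : (1 : K) ≠ 0 := one_ne_zero
    have hxF : (X * FF κ : K[X]).eval x ^ k ≠ 0 := by
      apply pow_ne_zero
      rw [eval_mul, eval_X]
      refine mul_ne_zero ?_ ?_
      · rintro rfl
        rw [zero_pow hh] at hx
        exact hne (by linear_combination hx)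
      · intro h0
        rw [h0, zero_pow hh] at hFx
        exact hne hFx.symm
    apply (mul_right_inj' hxF).1
    rw [mul_zero, ← eval_pow, ← eval_mul, map_sum, Finset.mul_sum, Finset.sum_range]
    have hk2 := congrArg (eval x) hkk
    rw [eval_finsetSum, eval_zero] at hk2
    rw [eval_finsetSum, ← hk2]
    refine Finset.sum_congr rfl fun j _ => ?_
    rw [map_add, mul_add, ← hT, ← hT]
    simp only [eval_add, eval_mul, eval_pow, eval_X, eval_smul, pow_mul, hx, hFx, pow_zero, Fin.is_lt,
      dite_true, Fin.eta, smul_eq_mul]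
    simp [mul_add]

theorem stepanov {K : Type} [Field K] [Fintype K] [DecidableEq K] (h : ℕ)
    (hcard : Fintype.card K = 2 * h + 1) (hev : Even h) (h2 : (2 : K) ≠ 0) (hh : 125 ≤ h) (κ : K) :
    ∃ x : K, x ^ h = -1 ∧ ((x ^ 2 - 1) * (x ^ 2 + κ * x + 1)) ^ h = -1 := by
  by_contra hcon
  push Not at hcon
  have hne : (1 : K) ≠ -1 := by
    intro h; apply h2; linear_combination h
  have hpm : ∀ y : K, y ≠ 0 → y ^ h = 1 ∨ y ^ h = -1 := by
    intro y hy
    have := FiniteField.pow_card_sub_one_eq_one y hy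
    rw [hcard, Nat.add_sub_cancel, mul_comm, pow_mul] at this
    simpa using (sq_eq_sq_iff_eq_or_eq_neg (a := y ^ h) (b := 1)).1 (by simpa using this)
  obtain ⟨a, b, ha, hb, ⟨j, hj, hab⟩, hv⟩ := exists_aux h (by omega) κ
  set R := ∑ j ∈ Finset.range 10,
          (X ^ (h * j) * FF κ ^ 0 * a j + X ^ (h * j) * FF κ ^ h * b j) with hRdef
  have hR0 : R ≠ 0 := fun h0 =>
    hab (nonvanish h 61 hcard h2 (by omega) κ 10 a b ha hb h0 j hj)
  let Z : Finset K := Finset.univ.filter fun x => x ^ h = -1 ∧ (FF κ).eval x ≠ 0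
  have hZc : h ≤ Z.card + 2 := by
    let A : Finset K := (nthRoots h (1 : K)).toFinset
    let B : Finset K := (X ^ 2 + C κ * X + 1 : K[X]).roots.toFinset
    have hA : A.card ≤ h := (Multiset.toFinset_card_le _).trans (card_nthRoots h 1)
    have hq : (X ^ 2 + C κ * X + 1 : K[X]) ≠ 0 := Monic.ne_zero (by monicity!)
    have hB : B.card ≤ 2 := (Multiset.toFinset_card_le _).trans ((card_roots' _).trans (by compute_degree!))
    have hsub : (Finset.univ : Finset K) ⊆ {0} ∪ A ∪ B ∪ Z := by
      intro x _
      simp only [Finset.mem_union, Finset.mem_singleton]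
      by_cases hx0 : x = 0
      · simp [hx0]
      rcases hpm x hx0 with h1 | h1
      · left; left; right
        simp only [A, Multiset.mem_toFinset]
        rw [mem_nthRoots (by omega)]; exact h1
      · by_cases hF : (FF κ).eval x = 0
        · left; right
          simp only [B, Multiset.mem_toFinset]
          rw [mem_roots hq, IsRoot]
          rw [FF_eval] at hF
          rcases mul_eq_zero.1 hF with h3 | h3
          · exfalso
            have h4 : x ^ 2 = 1 := by linear_combination h3
            obtain ⟨c, rfl⟩ := hev
            rw [← two_mul, pow_mul, h4, one_pow] at h1
            exact hne h1
          · simpa using h3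
        · right; simp [Z, h1, hF]
    have h5 := Finset.card_le_card hsub
    have h6 := Finset.card_union_le ({0} ∪ A ∪ B) Z
    have h7 := Finset.card_union_le ({0} ∪ A) B
    have h8 := Finset.card_union_le {0} A
    rw [Finset.card_univ, hcard] at h5
    rw [Finset.card_singleton] at h8
    omega
  have hdiv : ∏ x ∈ Z, (X - C x) ^ 14 ∣ R := by
    apply Finset.prod_dvd_of_coprime
    · intro x _ y _ hxy
      exact (isCoprime_X_sub_C_of_isUnit_sub (sub_ne_zero.2 hxy).isUnit).pow
    · intro x hx
      simp only [Z, Finset.mem_filter, Finset.mem_univ, true_and] at hx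
      apply mult_of_hasse
      intro k hk
      refine hv k hk x hx.1 ?_
      refine (hpm _ hx.2).resolve_right ?_
      rw [FF_eval]
      exact hcon x hx.1
  have hdeg := natDegree_le_of_dvd hdiv hR0
  rw [natDegree_prod_of_monic _ _ (fun x _ => (monic_X_sub_C x).pow 14)] at hdeg
  simp only [natDegree_pow, natDegree_X_sub_C, mul_one, Finset.sum_const, smul_eq_mul] at hdeg
  have hRd : R.natDegree ≤ 13 * h + 60 := by
    apply natDegree_sum_le_of_forall_le
    intro j hj
    rw [Finset.mem_range] at hj
    have hj' : h * j ≤ h * 9 := Nat.mul_le_mul_left _ (by omega)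
    have hFp : ∀ m, (FF κ ^ m).natDegree = m * 4 := by
      intro m; rw [natDegree_pow, FF_natDegree]
    have key : ∀ m ≤ h, ∀ p ∈ degreeLT K 61, (X ^ (h * j) * FF κ ^ m * p).natDegree ≤ 13 * h + 60 := by
      intro m hm p hp
      have h1 := natDegree_mul_le (p := X ^ (h * j) * FF κ ^ m) (q := p)
      have h2 := natDegree_mul_le (p := (X : K[X]) ^ (h * j)) (q := FF κ ^ m)
      rw [natDegree_X_pow, hFp] at h2
      have h3 := mem_natDegree hp
      omega
    refine (natDegree_add_le _ _).trans (max_le (key 0 (by omega) _ (ha j)) (key h le_rfl _ (hb j)))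
  omega

def pw {M : Type} (mul : M → M → M) (one : M) : ℕ → M → ℕ → M
  | 0, _, _ => one
  | f + 1, x, n => bif n == 0 then one else
      bif n % 2 == 1 then mul x (pw mul one f (mul x x) (n / 2)) else pw mul one f (mul x x) (n / 2)

theorem pw_ev {M K : Type} [Field K] (mul : M → M → M) (one : M) (ev : M → K)
    (hmul : ∀ a b, ev (mul a b) = ev a * ev b) (hone : ev one = 1) (f : ℕ) (x : M) (n : ℕ)
    (hn : n < 2 ^ f) : ev (pw mul one f x n) = ev x ^ n := by
  induction f generalizing x n with
  | zero => 
    have : n = 0 := by simpa using hn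
    simp [pw, this, hone]
  | succ f ih =>
    have hn2 : n / 2 < 2 ^ f := by rw [pow_succ] at hn; omega
    simp only [pw]
    by_cases h0 : n = 0
    · simp [h0, hone]
    · by_cases h1 : n % 2 = 1
      · simp only [h1, beq_self_eq_true, cond_true]
        have e : n = 2 * (n / 2) + 1 := by omega
        have : (n == 0) = false := by simpa using h0
        rw [this, cond_false, hmul, ih _ _ hn2, hmul]
        conv_rhs => rw [e]
        ring
      · have : (n == 0) = false := by simpa using h0
        have h1' : (n % 2 == 1) = false := by simpa using h1
        have e : n = 2 * (n / 2) := by omega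
        rw [this, h1', cond_false, cond_false, ih _ _ hn2, hmul]
        conv_rhs => rw [e]
        ring

def chk {M : Type} (mul add : M → M → M) (one neg : M) (eqb : M → M → Bool) (elts : List M)
    (h : ℕ) : Bool :=
  elts.all fun k => elts.any fun x =>
    eqb (pw mul one 8 x h) neg &&
    eqb (pw mul one 8 (mul (add (mul x x) neg) (add (mul x (add x k)) one)) h) neg

theorem chk_spec {M K : Type} [Field K] (mul add : M → M → M) (one neg : M) (eqb : M → M → Bool)
    (elts : List M) (h : ℕ) (hh : h < 256) (ev : M → K)
    (hmul : ∀ a b, ev (mul a b) = ev a * ev b)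
    (hadd : ∀ a b, ev (add a b) = ev a + ev b)
    (hone : ev one = 1) (hneg : ev neg = -1) (heq : ∀ a b, eqb a b = true → a = b)
    (hsurj : ∀ k : K, ∃ m ∈ elts, ev m = k)
    (hc : chk mul add one neg eqb elts h = true) (κ : K) :
    ∃ x : K, x ^ h = -1 ∧ ((x ^ 2 - 1) * (x ^ 2 + κ * x + 1)) ^ h = -1 := by
  obtain ⟨k, hk, rfl⟩ := hsurj κ
  unfold chk at hc
  rw [List.all_eq_true] at hc
  have := hc k hk
  rw [List.any_eq_true] at this
  obtain ⟨x, _, hx⟩ := this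
  rw [Bool.and_eq_true] at hx
  have h1 := congrArg ev (heq _ _ hx.1)
  have h2 := congrArg ev (heq _ _ hx.2)
  rw [pw_ev mul one ev hmul hone _ _ _ (by simpa using hh), hneg] at h1 h2
  refine ⟨ev x, h1, ?_⟩
  rw [← h2]
  simp only [hmul, hadd, hone, hneg]
  congr 1
  ring

def chkP (p h : ℕ) : Bool :=
  chk (fun a b => (a * b) % p) (fun a b => (a + b) % p) 1 (p - 1) Nat.beq (List.range p) h

theorem natMod {K : Type} [Field K] (p : ℕ) [CharP K p] (a : ℕ) : ((a % p : ℕ) : K) = a := by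
  conv_rhs => rw [← Nat.div_add_mod a p]
  push_cast
  rw [CharP.cast_eq_zero K p]; ring

theorem prime_case {K : Type} [Field K] [Fintype K] (p h : ℕ) (hp : p.Prime) [CharP K p]
    (hcard : Fintype.card K = p) (hh : h < 256)
    (hc : chkP p h = true) (κ : K) :
    ∃ x : K, x ^ h = -1 ∧ ((x ^ 2 - 1) * (x ^ 2 + κ * x + 1)) ^ h = -1 := by
  have := Fact.mk hp
  refine chk_spec _ _ _ _ _ _ h hh (fun a : ℕ => (a : K)) ?_ ?_ (by simp) ?_ ?_ ?_ hc κ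
  · intro a b; simp [natMod]
  · intro a b; simp [natMod]
  · simp [Nat.cast_sub hp.one_lt.le]
  · intro a b; exact Nat.eq_of_beq_eq_true
  · intro k
    have hb : Function.Bijective (ZMod.castHom (dvd_refl p) K) := by
      rw [Fintype.bijective_iff_injective_and_card]
      exact ⟨(ZMod.castHom _ K).injective, by rw [ZMod.card, hcard]⟩
    obtain ⟨z, hz⟩ := hb.2 k
    refine ⟨z.val, by simpa using ZMod.val_lt z, ?_⟩
    rw [← hz]
    simp

set_option maxRecDepth 100000 in
theorem chk_primes : [53, 61, 73, 89, 97, 101, 109, 113, 137, 149, 157, 173, 181, 193, 197, 229,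
    233, 241].all (fun p => chkP p (p / 2)) = true := by decide +kernel

def m2 (p d : ℕ) (x y : ℕ × ℕ) : ℕ × ℕ :=
  ((x.1 * y.1 + d * (x.2 * y.2)) % p, (x.1 * y.2 + x.2 * y.1) % p)
def a2 (p : ℕ) (x y : ℕ × ℕ) : ℕ × ℕ := ((x.1 + y.1) % p, (x.2 + y.2) % p)
def e2 (x y : ℕ × ℕ) : Bool := Nat.beq x.1 y.1 && Nat.beq x.2 y.2

def m3 (x y : ℕ × ℕ × ℕ) : ℕ × ℕ × ℕ :=
  ((x.1 * y.1 + 4 * (x.2.1 * y.2.2 + x.2.2 * y.2.1)) % 5,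
   (x.1 * y.2.1 + x.2.1 * y.1 + 4 * (x.2.1 * y.2.2 + x.2.2 * y.2.1) + 4 * (x.2.2 * y.2.2)) % 5,
   (x.1 * y.2.2 + x.2.1 * y.2.1 + x.2.2 * y.1 + 4 * (x.2.2 * y.2.2)) % 5)
def a3 (x y : ℕ × ℕ × ℕ) : ℕ × ℕ × ℕ := ((x.1 + y.1) % 5, (x.2.1 + y.2.1) % 5, (x.2.2 + y.2.2) % 5)
def e3 (x y : ℕ × ℕ × ℕ) : Bool := Nat.beq x.1 y.1 && e2 x.2 y.2

def m4 (x y : (ℕ × ℕ) × (ℕ × ℕ)) : (ℕ × ℕ) × (ℕ × ℕ) :=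
  (a2 3 (m2 3 2 x.1 y.1) (m2 3 2 (1, 1) (m2 3 2 x.2 y.2)), a2 3 (m2 3 2 x.1 y.2) (m2 3 2 x.2 y.1))
def a4 (x y : (ℕ × ℕ) × (ℕ × ℕ)) : (ℕ × ℕ) × (ℕ × ℕ) := (a2 3 x.1 y.1, a2 3 x.2 y.2)
def e4 (x y : (ℕ × ℕ) × (ℕ × ℕ)) : Bool := e2 x.1 y.1 && e2 x.2 y.2

def L2 (p : ℕ) : List (ℕ × ℕ) := List.product (List.range p) (List.range p)

theorem chk49 : chk (m2 7 3) (a2 7) (1, 0) (6, 0) e2 (L2 7) 24 = true := by decide +kernel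
theorem chk121 : chk (m2 11 2) (a2 11) (1, 0) (10, 0) e2 (L2 11) 60 = true := by decide +kernel
theorem chk169 : chk (m2 13 2) (a2 13) (1, 0) (12, 0) e2 (L2 13) 84 = true := by decide +kernel
theorem chk125 : chk m3 a3 (1, 0, 0) (4, 0, 0) e3 (List.product (List.range 5) (L2 5)) 62 = true := by
  decide +kernel
theorem chk81 : chk m4 a4 ((1, 0), (0, 0)) ((2, 0), (0, 0)) e4 (List.product (L2 3) (L2 3)) 40 = true := by
  decide +kernel

theorem cast_val {K : Type} [Field K] (p : ℕ) [Fact p.Prime] [CharP K p] (z : ZMod p) :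
    ((z.val : ℕ) : K) = ZMod.castHom (dvd_refl p) K z := by
  simp

theorem cast_one {K : Type} [Field K] (p : ℕ) [CharP K p] (a b : ℕ) (h : a % p = b % p) :
    (a : K) = b := by
  rw [← natMod p a, h, natMod]

theorem neg_cast {K : Type} [Field K] (p : ℕ) [CharP K p] (hp : 0 < p) :
    ((p - 1 : ℕ) : K) = -1 := by
  simp [Nat.cast_sub (show 1 ≤ p from hp)]

theorem mem_range_val (p : ℕ) [Fact p.Prime] (z : ZMod p) : z.val ∈ List.range p := by
  simpa using ZMod.val_lt z

theorem exists_sqrt {K : Type} [Field K] [Fintype K] (h2 : ringChar K ≠ 2) (a : K) (ha : a ≠ 0)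
    (h : a ^ (Fintype.card K / 2) = 1) : ∃ t : K, t * t = a := by
  obtain ⟨t, ht⟩ := (FiniteField.isSquare_iff h2 ha).2 h
  exact ⟨t, ht.symm⟩

theorem quad_case {K : Type} [Field K] [Fintype K] (p d h : ℕ) [Fact p.Prime] [CharP K p]
    (hcard : Fintype.card K = p ^ 2) (h2 : ringChar K ≠ 2) (hh : h < 256)
    (hd : ∀ z : ZMod p, z * z ≠ d) (hd1 : d ^ (p ^ 2 / 2) % p = 1 % p)
    (hc : chk (m2 p d) (a2 p) (1, 0) (p - 1, 0) e2 (L2 p) h = true) (κ : K) :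
    ∃ x : K, x ^ h = -1 ∧ ((x ^ 2 - 1) * (x ^ 2 + κ * x + 1)) ^ h = -1 := by
  let u := ZMod.castHom (dvd_refl p) K
  have hu : Function.Injective u := u.injective
  have hd0 : (d : K) ≠ 0 := by
    intro h0
    apply hd 0
    apply hu
    simp [h0]
  obtain ⟨θ, hθ⟩ := exists_sqrt h2 (d : K) hd0 (by
    rw [hcard]
    have := cast_one (K := K) p _ _ hd1
    simpa using this)
  refine chk_spec _ _ _ _ _ _ h hh (fun a : ℕ × ℕ => (a.1 : K) + a.2 * θ) ?_ ?_ (by simp) ?_ ?_ ?_ hc κ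
  · intro a b; simp [natMod, m2]; linear_combination (-(a.2 : K) * b.2) * hθ
  · intro a b; simp [natMod, a2]; ring
  · simp [Nat.cast_sub (Fact.out : p.Prime).one_lt.le]
  · rintro ⟨a, b⟩ ⟨a', b'⟩ he
    simp only [e2, Bool.and_eq_true] at he
    rw [Nat.eq_of_beq_eq_true he.1, Nat.eq_of_beq_eq_true he.2]
  · intro k
    have hb : Function.Bijective (fun v : ZMod p × ZMod p => u v.1 + u v.2 * θ) := by
      rw [Fintype.bijective_iff_injective_and_card]
      refine ⟨?_, by rw [Fintype.card_prod, ZMod.card, hcard, pow_two]⟩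
      rintro ⟨a, b⟩ ⟨a', b'⟩ he
      simp only at he
      have e : u (a - a') = u (b' - b) * θ := by
        rw [map_sub, map_sub]; linear_combination he
      by_cases hbb : b' - b = 0
      · rw [hbb, map_zero, zero_mul, map_eq_zero] at e
        rw [sub_eq_zero.1 hbb, sub_eq_zero.1 e]
      · exfalso
        apply hd ((a - a') / (b' - b))
        apply hu
        have hn : u (b' - b) ≠ 0 := by simpa only [ne_eq, map_eq_zero] using hbb
        rw [map_mul, map_div₀, e, mul_div_cancel_left₀ _ hn, hθ]
        simp
    obtain ⟨z, hz⟩ := hb.2 k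
    refine ⟨(z.1.val, z.2.val), ?_, ?_⟩
    · exact List.pair_mem_product.2 ⟨mem_range_val p _, mem_range_val p _⟩
    · rw [← hz]
      simp only [cast_val]
      rfl

theorem case81 {K : Type} [Field K] [Fintype K] [CharP K 3]
    (hcard : Fintype.card K = 81) (h2 : ringChar K ≠ 2) (κ : K) :
    ∃ x : K, x ^ 40 = -1 ∧ ((x ^ 2 - 1) * (x ^ 2 + κ * x + 1)) ^ 40 = -1 := by
  have := Fact.mk Nat.prime_three
  have h3 : (3 : K) = 0 := by exact_mod_cast CharP.cast_eq_zero K 3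
  obtain ⟨i, hi⟩ := exists_sqrt h2 (-1 : K) (by simp) (by rw [hcard]; norm_num)
  have h11 : (1 + i) ^ 8 = 1 := by
    have e : (1 + i) ^ 2 = -i := by linear_combination hi + i * h3
    calc (1 + i) ^ 8 = ((1 + i) ^ 2) ^ 4 := by ring
      _ = (i * i) ^ 2 := by rw [e]; ring
      _ = 1 := by rw [hi]; ring
  obtain ⟨θ, hθ⟩ := exists_sqrt h2 (1 + i : K) (by intro h0; rw [h0] at h11; norm_num at h11)
    (by rw [hcard, show 81 / 2 = 8 * 5 by norm_num, pow_mul, h11, one_pow])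
  let ev : (ℕ × ℕ) × (ℕ × ℕ) → K := fun a => (a.1.1 + a.1.2 * i) + (a.2.1 + a.2.2 * i) * θ
  have hmul : ∀ a b, ev (m4 a b) = ev a * ev b := by
    intro a b
    simp [ev, natMod, m4, m2, a2]
    have e2 : (2 : K) = -1 := by linear_combination h3
    rw [e2]
    linear_combination (-((a.1.2 : K) * b.1.2 + a.2.1 * b.2.2 + a.2.2 * b.2.1 + a.2.2 * b.2.2 * (1 + i)
      + (a.1.2 * b.2.2 + a.2.2 * b.1.2) * θ)) * hi
      - ((a.2.1 + a.2.2 * i : K) * (b.2.1 + b.2.2 * i)) * hθ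
  have hinv : ∀ a b c d : Fin 3, (a, b, c, d) ≠ (0, 0, 0, 0) → 
      e4 (pw m4 ((1, 0), (0, 0)) 8 ((a, b), (c, d)) 80) ((1, 0), (0, 0)) = true := by decide +kernel
  have he4 : ∀ a b, e4 a b = true → a = b := by
    rintro ⟨⟨a, b⟩, ⟨c, d⟩⟩ ⟨⟨a', b'⟩, ⟨c', d'⟩⟩ he
    simp only [e4, e2, Bool.and_eq_true] at he
    rw [Nat.eq_of_beq_eq_true he.1.1, Nat.eq_of_beq_eq_true he.1.2, Nat.eq_of_beq_eq_true he.2.1,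
      Nat.eq_of_beq_eq_true he.2.2]
  have hone : ev ((1, 0), (0, 0)) = 1 := by simp [ev]
  refine chk_spec m4 a4 _ _ e4 _ 40 (by norm_num) ev hmul ?_ hone ?_ he4 ?_ chk81 κ
  · intro a b; simp [ev, natMod, a4, a2]; ring
  · simp [ev]; linear_combination h3
  · intro k
    let u := ZMod.castHom (dvd_refl 3) K
    have hb : Function.Bijective (fun v : (ZMod 3 × ZMod 3) × (ZMod 3 × ZMod 3) =>
        ev ((v.1.1.val, v.1.2.val), (v.2.1.val, v.2.2.val))) := by
      rw [Fintype.bijective_iff_injective_and_card]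
      refine ⟨?_, by simp [hcard]⟩
      have hz : ∀ v : (ZMod 3 × ZMod 3) × (ZMod 3 × ZMod 3), 
          ev ((v.1.1.val, v.1.2.val), (v.2.1.val, v.2.2.val)) = 0 → v = 0 := by
        rintro ⟨⟨a, b⟩, ⟨c, d⟩⟩ h0
        by_contra hne
        have h5 := hinv a b c d (by
          intro h; apply hne
          have e1 : a = 0 := congrArg (fun t => t.1) h
          have e2 : b = 0 := congrArg (fun t => t.2.1) h
          have e3 : c = 0 := congrArg (fun t => t.2.2.1) h
          have e4 : d = 0 := congrArg (fun t => t.2.2.2) h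
          rw [e1, e2, e3, e4]
          rfl)
        have h6 := congrArg ev (he4 _ _ h5)
        rw [pw_ev m4 _ ev hmul hone _ _ _ (by norm_num), hone] at h6
        change ev ((a.val, b.val), (c.val, d.val)) ^ 80 = 1 at h6
        rw [h0] at h6
        norm_num at h6
      intro v w hvw
      have h7 := hz (v - w) (by
        simp only [ev, cast_val, Prod.fst_sub, Prod.snd_sub, map_sub] at hvw ⊢
        linear_combination hvw)
      exact sub_eq_zero.1 h7
    obtain ⟨z, hz⟩ := hb.2 k
    refine ⟨_, ?_, hz⟩
    exact List.pair_mem_product.2 ⟨List.pair_mem_product.2 ⟨mem_range_val 3 _, mem_range_val 3 _⟩, 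
      List.pair_mem_product.2 ⟨mem_range_val 3 _, mem_range_val 3 _⟩⟩

theorem exists_cubic {K : Type} [Field K] [Fintype K] (hcard : Fintype.card K = 125) :
    ∃ t : K, t ^ 3 + t + 1 = 0 := by
  have key : ∀ x : ZMod 5, ¬ x ^ 3 + x + 1 = 0 := by decide
  have := Fact.mk Nat.prime_five
  let f : (ZMod 5)[X] := X ^ 3 + X + 1
  have hdeg : f.natDegree = 3 := by simp only [f]; compute_degree!
  have hm : f.Monic := by simp only [f]; monicity!
  have hirr : Irreducible f := by
    refine irreducible_of_degree_le_three_of_not_isRoot (by rw [hdeg]; decide) ?_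
    intro x
    simp only [IsRoot, f, eval_add, eval_pow, eval_X, eval_one]
    exact key x
  have := Fact.mk hirr
  let B := (AdjoinRoot.powerBasis' hm)
  have : Module.Finite (ZMod 5) (AdjoinRoot f) := B.finite
  have : Finite (AdjoinRoot f) := Module.finite_of_finite (ZMod 5)
  let _ : Fintype (AdjoinRoot f) := Fintype.ofFinite _
  have hc : Fintype.card (AdjoinRoot f) = 125 := by
    rw [Module.card_eq_pow_finrank (K := ZMod 5), B.finrank, ZMod.card, AdjoinRoot.powerBasis'_dim, hdeg]
    norm_num
  let φ := FiniteField.ringEquivOfCardEq (K := AdjoinRoot f) (K' := K) (hc.trans hcard.symm)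
  refine ⟨φ (AdjoinRoot.root f), ?_⟩
  have h0 := AdjoinRoot.eval₂_root f
  simp only [f, eval₂_add, eval₂_pow, eval₂_X, eval₂_one] at h0
  rw [← map_pow, ← map_add, ← map_one φ, ← map_add]
  change φ (AdjoinRoot.root f ^ 3 + AdjoinRoot.root f + 1) = 0
  rw [show AdjoinRoot.root f ^ 3 + AdjoinRoot.root f + 1 = 0 from h0, map_zero]

theorem case125 {K : Type} [Field K] [Fintype K] [CharP K 5]
    (hcard : Fintype.card K = 125) (κ : K) :
    ∃ x : K, x ^ 62 = -1 ∧ ((x ^ 2 - 1) * (x ^ 2 + κ * x + 1)) ^ 62 = -1 := by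
  have := Fact.mk Nat.prime_five
  have h3 : (5 : K) = 0 := by exact_mod_cast CharP.cast_eq_zero K 5
  obtain ⟨θ, hθ⟩ := exists_cubic hcard
  let ev : ℕ × ℕ × ℕ → K := fun a => a.1 + a.2.1 * θ + a.2.2 * θ ^ 2
  have hmul : ∀ a b, ev (m3 a b) = ev a * ev b := by
    intro a b
    simp [ev, natMod, m3]
    have e2 : (4 : K) = -1 := by linear_combination h3
    rw [e2]
    linear_combination (-((a.2.1 : K) * b.2.2 + a.2.2 * b.2.1 + a.2.2 * b.2.2 * θ)) * hθ
  have hinv : ∀ a b c : Fin 5, (a, b, c) ≠ (0, 0, 0) → 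
      e3 (pw m3 (1, 0, 0) 8 (a, b, c) 124) (1, 0, 0) = true := by decide +kernel
  have he3 : ∀ a b, e3 a b = true → a = b := by
    rintro ⟨a, b, c⟩ ⟨a', b', c'⟩ he
    simp only [e3, e2, Bool.and_eq_true] at he
    rw [Nat.eq_of_beq_eq_true he.1, Nat.eq_of_beq_eq_true he.2.1, Nat.eq_of_beq_eq_true he.2.2]
  have hone : ev (1, 0, 0) = 1 := by simp [ev]
  refine chk_spec m3 a3 _ _ e3 _ 62 (by norm_num) ev hmul ?_ hone ?_ he3 ?_ chk125 κ
  · intro a b; simp [ev, natMod, a3]; ring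
  · simp [ev]; linear_combination h3
  · intro k
    have hb : Function.Bijective (fun v : ZMod 5 × ZMod 5 × ZMod 5 =>
        ev (v.1.val, v.2.1.val, v.2.2.val)) := by
      rw [Fintype.bijective_iff_injective_and_card]
      refine ⟨?_, by simp [hcard]⟩
      have hz : ∀ v : ZMod 5 × ZMod 5 × ZMod 5, 
          ev (v.1.val, v.2.1.val, v.2.2.val) = 0 → v = 0 := by
        rintro ⟨a, b, c⟩ h0
        by_contra hne
        have h5 := hinv a b c (by
          intro h; apply hne
          have e1 : a = 0 := congrArg (fun t => t.1) h
          have e2 : b = 0 := congrArg (fun t => t.2.1) h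
          have e3 : c = 0 := congrArg (fun t => t.2.2) h
          rw [e1, e2, e3]
          rfl)
        have h6 := congrArg ev (he3 _ _ h5)
        rw [pw_ev m3 _ ev hmul hone _ _ _ (by norm_num), hone] at h6
        change ev (a.val, b.val, c.val) ^ 124 = 1 at h6
        rw [h0] at h6
        norm_num at h6
      intro v w hvw
      have h7 := hz (v - w) (by
        simp only [ev, cast_val, Prod.fst_sub, Prod.snd_sub, map_sub] at hvw ⊢
        linear_combination hvw)
      exact sub_eq_zero.1 h7
    obtain ⟨z, hz⟩ := hb.2 k
    refine ⟨_, ?_, hz⟩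
    exact List.pair_mem_product.2 ⟨mem_range_val 5 _, 
      List.pair_mem_product.2 ⟨mem_range_val 5 _, mem_range_val 5 _⟩⟩

theorem key1 : ∀ q < 251, (45 < q ∧ q % 4 = 1 ∧ q ∉ [53, 61, 73, 89, 97, 101, 109, 113, 137, 149,
    157, 173, 181, 193, 197, 229, 233, 241]) → q % 3 = 0 ∨ q % 5 = 0 ∨ q % 7 = 0 ∨ q % 11 = 0
    ∨ q % 13 = 0 := by decide +kernel

theorem key2 : ∀ q < 16, ∀ r < 6, (3 ≤ q ∧ 0 < r ∧ r ≠ 1 ∧ 45 < q ^ r ∧ q ^ r < 251 ∧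
    q ^ r % 4 = 1 ∧ q % 2 = 1 ∧ q ≠ 9 ∧ q ≠ 15) → (q = 7 ∧ r = 2) ∨ (q = 3 ∧ r = 4) ∨
    (q = 11 ∧ r = 2) ∨ (q = 5 ∧ r = 3) ∨ (q = 13 ∧ r = 2) := by
  intro q hq r hr h
  interval_cases q <;> interval_cases r <;> first | decide | (exfalso; revert h; decide)

theorem nsq7 : ∀ z : ZMod 7, z * z ≠ (3 : ℕ) := by decide
theorem nsq11 : ∀ z : ZMod 11, z * z ≠ (2 : ℕ) := by decide
theorem nsq13 : ∀ z : ZMod 13, z * z ≠ (2 : ℕ) := by decide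

theorem odd_case {K : Type} [Field K] [Fintype K] [DecidableEq K] (h : ℕ)
    (hcard : Fintype.card K = 2 * h + 1) (hodd : Odd h) (h2 : (2 : K) ≠ 0) (hh : 5 ≤ h) (κ : K) :
    ∃ x : K, x ^ h = -1 ∧ ((x ^ 2 - 1) * (x ^ 2 + κ * x + 1)) ^ h = -1 := by
  have hne : (1 : K) ≠ -1 := by
    intro h; apply h2; linear_combination h
  have hpm : ∀ y : K, y ≠ 0 → y ^ h = 1 ∨ y ^ h = -1 := by
    intro y hy
    have := FiniteField.pow_card_sub_one_eq_one y hy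
    rw [hcard, Nat.add_sub_cancel, mul_comm, pow_mul] at this
    simpa using (sq_eq_sq_iff_eq_or_eq_neg (a := y ^ h) (b := 1)).1 (by simpa using this)
  have hex : ∃ x : K, x ^ h = -1 ∧ (FF κ).eval x ≠ 0 := by
    by_contra hcon
    push Not at hcon
    let A : Finset K := (nthRoots h (1 : K)).toFinset
    let B : Finset K := (FF κ).roots.toFinset
    have hA : A.card ≤ h := (Multiset.toFinset_card_le _).trans (card_nthRoots h 1)
    have hB : B.card ≤ 4 := (Multiset.toFinset_card_le _).trans
      ((card_roots' _).trans (FF_natDegree κ).le)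
    have hsub : (Finset.univ : Finset K) ⊆ {0} ∪ A ∪ B := by
      intro x _
      simp only [Finset.mem_union, Finset.mem_singleton]
      by_cases hx0 : x = 0
      · simp [hx0]
      rcases hpm x hx0 with h1 | h1
      · left; right
        simp only [A, Multiset.mem_toFinset]
        rw [mem_nthRoots (by omega)]; exact h1
      · right
        simp only [B, Multiset.mem_toFinset]
        rw [mem_roots (FF_monic κ).ne_zero]
        exact hcon x h1
    have h5 := Finset.card_le_card hsub
    have h7 := Finset.card_union_le ({0} ∪ A) B
    have h8 := Finset.card_union_le {0} A
    rw [Finset.card_univ, hcard] at h5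
    rw [Finset.card_singleton] at h8
    omega
  obtain ⟨x, hx, hF⟩ := hex
  rw [FF_eval] at hF
  rcases hpm _ hF with h1 | h1
  · have hx0 : x ≠ 0 := by
      rintro rfl
      rw [zero_pow (by omega)] at hx
      exact one_ne_zero (α := K) (by linear_combination hx)
    refine ⟨x⁻¹, by rw [inv_pow, hx]; norm_num, ?_⟩
    have e : (x⁻¹ ^ 2 - 1) * (x⁻¹ ^ 2 + κ * x⁻¹ + 1) =
        -((x ^ 2 - 1) * (x ^ 2 + κ * x + 1)) * (x⁻¹) ^ 4 := by
      field_simp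
      ring
    rw [e, mul_pow, hodd.neg_pow, h1, ← pow_mul, mul_comm 4 h, pow_mul, inv_pow, hx]
    norm_num
  · exact ⟨x, hx, h1⟩

theorem core {K : Type} [Field K] [Fintype K] [DecidableEq K] (q r : ℕ) (hq : q.Prime) (hq2 : q ≠ 2)
    (hr : 0 < r) (h45 : 45 < q ^ r) (hcard : Fintype.card K = q ^ r) (κ : K) :
    ∃ h, Fintype.card K = 2 * h + 1 ∧ (2 : K) ≠ 0 ∧
      ∃ x : K, x ^ h = -1 ∧ ((x ^ 2 - 1) * (x ^ 2 + κ * x + 1)) ^ h = -1 := by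
  have hqodd : Odd q := hq.odd_of_ne_two hq2
  obtain ⟨h, hh⟩ := hqodd.pow (n := r)
  have := Fact.mk hq
  have hchar : CharP K q := charP_of_card_eq_prime_pow hcard
  have h2 : (2 : K) ≠ 0 := by
    intro h0
    have h1 : ((2 : ℕ) : K) = 0 := by exact_mod_cast h0
    rw [CharP.cast_eq_zero_iff K q] at h1
    exact hq2 ((Nat.prime_dvd_prime_iff_eq hq Nat.prime_two).1 h1)
  have hrc : ringChar K ≠ 2 := by rw [ringChar.eq K q]; exact hq2
  have hcard' := hcard.trans hh
  refine ⟨h, hcard', h2, ?_⟩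
  rcases Nat.even_or_odd h with hev | hodd
  swap
  · exact odd_case h hcard' hodd h2 (by omega) κ
  by_cases hbig : 125 ≤ h
  · exact stepanov h hcard' hev h2 hbig κ
  have hlt : q ^ r < 251 := by omega
  have hq3 : 3 ≤ q := by have := hq.two_le; omega
  obtain ⟨h', rfl⟩ := hev
  have hr6 : r < 6 := by
    by_contra hcon
    have h1 : 3 ^ 6 ≤ 3 ^ r := Nat.pow_le_pow_right (by norm_num) (by omega)
    have h3 : 3 ^ r ≤ q ^ r := Nat.pow_le_pow_left hq3 r
    omega
  by_cases hr1 : r = 1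
  · subst hr1
    rw [pow_one] at *
    have hmem : q ∈ [53, 61, 73, 89, 97, 101, 109, 113, 137, 149, 157, 173, 181, 193, 197, 229,
        233, 241] := by
      by_contra hcon
      have hnd : ∀ d, d.Prime → d < 45 → q % d ≠ 0 := by
        intro d hd hd45 h0
        have := (Nat.prime_dvd_prime_iff_eq hd hq).1 (Nat.dvd_of_mod_eq_zero h0)
        omega
      rcases key1 q hlt ⟨h45, by omega, hcon⟩ with h | h | h | h | h
      · exact hnd 3 (by norm_num) (by norm_num) h
      · exact hnd 5 (by norm_num) (by norm_num) h
      · exact hnd 7 (by norm_num) (by norm_num) h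
      · exact hnd 11 (by norm_num) (by norm_num) h
      · exact hnd 13 (by norm_num) (by norm_num) h
    have hc := List.all_eq_true.1 chk_primes q hmem
    have e : q / 2 = h' + h' := by omega
    simp only [e] at hc
    exact prime_case q _ hq hcard (by omega) hc κ
  · have hq16 : q < 16 := by
      by_contra hcon
      have h1 : q ^ 2 ≤ q ^ r := Nat.pow_le_pow_right (by omega) (by omega)
      have h3 : 16 ^ 2 ≤ q ^ 2 := Nat.pow_le_pow_left (by omega) 2
      omega
    have hcases : (q = 7 ∧ r = 2) ∨ (q = 3 ∧ r = 4) ∨ (q = 11 ∧ r = 2) ∨ (q = 5 ∧ r = 3) ∨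
        (q = 13 ∧ r = 2) := by
      refine key2 q hq16 r hr6 ⟨hq3, hr, hr1, h45, hlt, by omega, Nat.odd_iff.1 hqodd, ?_, ?_⟩
      · rintro rfl; norm_num at hq
      · rintro rfl; norm_num at hq
    rcases hcases with ⟨rfl, rfl⟩ | ⟨rfl, rfl⟩ | ⟨rfl, rfl⟩ | ⟨rfl, rfl⟩ | ⟨rfl, rfl⟩
    · have e : h' + h' = 24 := by omega
      rw [e]
      exact quad_case 7 3 24 hcard hrc (by norm_num) nsq7 (by norm_num) chk49 κ
    · have e : h' + h' = 40 := by omega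
      rw [e]
      exact case81 (by rw [hcard]; norm_num) hrc κ
    · have e : h' + h' = 60 := by omega
      rw [e]
      exact quad_case 11 2 60 hcard hrc (by norm_num) nsq11 (by norm_num) chk121 κ
    · have e : h' + h' = 62 := by omega
      rw [e]
      exact case125 (by rw [hcard]; norm_num) κ
    · have e : h' + h' = 84 := by omega
      rw [e]
      exact quad_case 13 2 84 hcard hrc (by norm_num) nsq13 (by norm_num) chk169 κ

theorem odd_exp {K : Type} [Field K] [Fintype K] (h : ℕ) (hcard : Fintype.card K = 2 * h + 1)
    (h2 : (2 : K) ≠ 0) (g : Kˣ) (hg : ∀ x : Kˣ, x ∈ Subgroup.zpowers g) (x : K) (hx0 : x ≠ 0)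
    (hx : x ^ h = -1) : ∃ m : ℤ, Odd m ∧ ((g ^ m : Kˣ) : K) = x := by
  obtain ⟨m, hm⟩ := hg (Units.mk0 x hx0)
  have hmx : ((g ^ m : Kˣ) : K) = x := by
    have := congrArg (Units.val) hm
    simpa using this
  refine ⟨m, ?_, hmx⟩
  rw [← Int.not_even_iff_odd]
  rintro ⟨j, rfl⟩
  have h1 : x = ((g ^ j : Kˣ) : K) ^ 2 := by
    rw [← hmx, zpow_add, Units.val_mul, pow_two]
  have h3 := FiniteField.pow_card_sub_one_eq_one ((g ^ j : Kˣ) : K) (Units.ne_zero _)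
  rw [hcard, Nat.add_sub_cancel, pow_mul, ← h1, hx] at h3
  apply h2
  linear_combination -h3

end Stmt17

theorem stmt_17 (q r : ℕ) (hq : q.Prime) (hq2 : q ≠ 2) (hr : 0 < r)
    (h45 : 45 < q ^ r)
    (K : Type) [Field K] [Fintype K] (hcard : Fintype.card K = q ^ r)
    (g : Kˣ) (hg : ∀ x : Kˣ, x ∈ Subgroup.zpowers g) :
    ∀ k : K, ∃ m n : ℤ, Odd m ∧ Odd n ∧
      (((g ^ m : Kˣ) : K) - ((g ^ (-m) : Kˣ) : K)) * ((g ^ n : Kˣ) : K)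
        - (((g ^ m : Kˣ) : K) + ((g ^ (-m) : Kˣ) : K)) = k := by
  classical
  intro k
  obtain ⟨h, hc, h2, x, hx, hF⟩ := Stmt17.core q r hq hq2 hr h45 hcard k
  have hh : h ≠ 0 := by omega
  have hnz : ∀ y : K, y ^ h = -1 → y ≠ 0 := by
    rintro y hy rfl
    rw [zero_pow hh] at hy
    exact one_ne_zero (α := K) (by linear_combination hy)
  have hx0 := hnz x hx
  have hF0 := hnz _ hF
  have ha : x ^ 2 - 1 ≠ 0 := (mul_ne_zero_iff.1 hF0).1
  have hb : x ^ 2 + k * x + 1 ≠ 0 := (mul_ne_zero_iff.1 hF0).2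
  have hy : ((x ^ 2 + k * x + 1) / (x ^ 2 - 1)) ^ h = -1 := by
    have e : (x ^ 2 + k * x + 1) / (x ^ 2 - 1) =
        ((x ^ 2 - 1) * (x ^ 2 + k * x + 1)) / (x ^ 2 - 1) ^ 2 := by
      field_simp
    have h3 := FiniteField.pow_card_sub_one_eq_one (x ^ 2 - 1) ha
    rw [hc, Nat.add_sub_cancel, pow_mul] at h3
    rw [e, div_pow, hF, h3, div_one]
  obtain ⟨m, hm, hmx⟩ := Stmt17.odd_exp h hc h2 g hg x hx0 hx
  obtain ⟨n, hn, hny⟩ := Stmt17.odd_exp h hc h2 g hg _ (hnz _ hy) hy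
  refine ⟨m, n, hm, hn, ?_⟩
  rw [zpow_neg, Units.val_inv_eq_inv_val, hmx, hny]
  field_simp
  ring
end

section
/- Let p be a prime with p ≡ 1 (mod 4), t, b positive integers with t² + 4 = b²p, and 𝓕 the associated Lucas sequence. Then for all nonnegative integers ν and all positive integers n, if p^ν divides n then p^ν divides 𝓕_n. -/
theorem stmt_18 (p : ℕ) (hp : p.Prime) (hp4 : p % 4 = 1)
    (t b : ℤ) (ht : 0 < t) (hb : 0 < b)
    (hpt : t ^ 2 + 4 = b ^ 2 * (p : ℤ))
    (F : ℤ → ℤ) (hF0 : F 0 = 0) (hF1 : F 1 = 1)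
    (hF : ∀ k : ℤ, F (k + 2) = t * F (k + 1) + F k) :
    ∀ (ν : ℕ) (n : ℕ), 0 < n → p ^ ν ∣ n → ((p : ℤ)) ^ ν ∣ F (n : ℤ) := by
  obtain ⟨f, hf⟩ : ∃ f : ℕ → ℤ, ∀ n : ℕ, f n = F n := ⟨fun n => F n, fun _ => rfl⟩
  have f0 : f 0 = 0 := by rw [hf]; exact hF0
  have f1 : f 1 = 1 := by rw [hf]; exact hF1
  have fr : ∀ k, f (k + 2) = t * f (k + 1) + f k := by
    intro k
    have := hF k
    rw [hf, hf, hf]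
    push_cast
    exact this
  obtain ⟨L, hL⟩ : ∃ L : ℕ → ℤ, ∀ n : ℕ, L n = 2 * f (n + 1) - t * f n := ⟨_, fun _ => rfl⟩
  have L0 : L 0 = 2 := by rw [hL, f0, zero_add, f1]; ring
  have L1 : L 1 = t := by rw [hL, fr 0, f0, zero_add, f1]; ring
  have Lr : ∀ k, L (k + 2) = t * L (k + 1) + L k := by
    intro k
    rw [hL, hL, hL, show k + 2 + 1 = (k + 1) + 2 from rfl, fr (k + 1), fr k]
    ring
  have A : ∀ m n, 2 * f (m + n) = f m * L n + L m * f n ∧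
      2 * f (m + (n + 1)) = f m * L (n + 1) + L m * f (n + 1) := by
    intro m n
    induction n with
    | zero =>
      constructor
      · rw [L0, f0, add_zero]; ring
      · rw [zero_add, L1, f1, hL]; ring
    | succ n ih =>
      refine ⟨ih.2, ?_⟩
      have h1 := fr (m + n)
      have h2 := Lr n
      have h3 := fr n
      rw [show m + (n + 1 + 1) = m + n + 2 by ring, h1, show n + 1 + 1 = n + 2 from rfl, h2, h3]
      have h4 := ih.2
      rw [← add_assoc] at h4
      linear_combination ih.1 + t * h4
  have B : ∀ m n, 2 * L (m + n) = L m * L n + (t ^ 2 + 4) * f m * f n ∧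
      2 * L (m + (n + 1)) = L m * L (n + 1) + (t ^ 2 + 4) * f m * f (n + 1) := by
    intro m n
    induction n with
    | zero =>
      constructor
      · rw [L0, f0, add_zero]; ring
      · rw [zero_add, L1, f1, hL, hL, fr m]; ring
    | succ n ih =>
      refine ⟨ih.2, ?_⟩
      have h1 := Lr (m + n)
      have h2 := Lr n
      have h3 := fr n
      rw [show m + (n + 1 + 1) = m + n + 2 by ring, h1, show n + 1 + 1 = n + 2 from rfl, h2, h3]
      have h4 := ih.2
      rw [← add_assoc] at h4
      linear_combination ih.1 + t * h4
  have C : ∀ n k : ℕ, ∃ x y : ℤ,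
      2 ^ k * f ((k + 1) * n) = (k + 1) * f n * L n ^ k + p * f n * x ∧
      2 ^ k * L ((k + 1) * n) = L n ^ (k + 1) + p * y := by
    intro n k
    induction k with
    | zero => exact ⟨0, 0, by simp, by simp⟩
    | succ k ih =>
      obtain ⟨x, y, hx, hy⟩ := ih
      have h1 := (A ((k + 1) * n) n).1
      have h2 := (B ((k + 1) * n) n).1
      rw [hpt] at h2
      refine ⟨x * L n + y, y * L n + 2 ^ k * b ^ 2 * f ((k + 1) * n) * f n, ?_, ?_⟩
      · rw [show (k + 1 + 1) * n = (k + 1) * n + n by ring]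
        push_cast
        linear_combination 2 ^ k * h1 + L n * hx + f n * hy
      · rw [show (k + 1 + 1) * n = (k + 1) * n + n by ring]
        linear_combination 2 ^ k * h2 + L n * hy
  have key : ∀ (ν n : ℕ), p ^ ν ∣ n → (p : ℤ) ^ ν ∣ f n := by
    intro ν
    induction ν with
    | zero => intro n _; simp
    | succ ν ih =>
      rintro _ ⟨c, rfl⟩
      obtain ⟨d, hd⟩ := ih (p ^ ν * c) (dvd_mul_right _ _)
      obtain ⟨k, rfl⟩ : ∃ k, p = k + 1 := ⟨p - 1, by have := hp.pos; omega⟩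
      obtain ⟨x, y, hx, -⟩ := C ((k + 1) ^ ν * c) k
      have hc : IsCoprime (((k + 1 : ℕ) : ℤ) ^ (ν + 1)) (2 ^ k) := by
        apply IsCoprime.pow
        have : Nat.Coprime (k + 1) 2 := by
          rw [Nat.coprime_two_right, Nat.odd_iff]; omega
        exact_mod_cast Nat.isCoprime_iff_coprime.mpr this
      apply hc.dvd_of_dvd_mul_left
      rw [show (k + 1) ^ (ν + 1) * c = (k + 1) * ((k + 1) ^ ν * c) by ring, hx, hd]
      refine ⟨d * L ((k + 1) ^ ν * c) ^ k + d * x, ?_⟩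
      push_cast
      ring
  intro ν n _ h
  rw [← hf]
  exact key ν n h
end
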